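/- Let m be a tempered Borel measure on ℝ^d whose Fourier transform in the Parseval sense is a locally integrable function κ : ℝ^d → [0,∞] with κ(x) < ∞ for every x ≠ 0. Then for any bounded function φ : ℝ^d → ℂ with bounded support which is continuous Lebesgue-almost everywhere, ∫_{ℝ^d}∫_{ℝ^d} κ(x−y) φ(x) conj(φ(y)) dx dy = (2π)^{-d} ∫_{ℝ^d} |ℱφ(ξ)|² m(dξ); in particular the double integral on the left-hand side is absolutely convergent, real and nonnegative, and the right-hand side is finite. -/

import Mathlib

/-!
For smooth compactly supported `f`, the autocorrelation `ψ(x) = ∫ f(t) conj(f(t-x)) dt` is a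
Schwartz function with `ℱψ = |ℱf|²`, so the Parseval hypothesis applied to `ψ`, combined with
Fubini and a shear on the left-hand side, is the energy identity for `f` (`energy_smooth`).
Temperedness makes `|ℱf|²` genuinely `m`-integrable, so that no Bochner integral is a junk value.

For general `φ`, take `f n = ρ n * φ` with mollifiers `ρ n` of shrinking support. The `f n` are
uniformly bounded, supported in a common ball, and converge to `φ` at each continuity point of `φ`,
hence almost everywhere. The energies converge by dominated convergence: since `κ` is locally
integrable, `κ(x-y)` is integrable over a product of balls (`integrable_kernel`). On the Fourier
side `ℱ(f n) = ℱ(ρ n) ℱφ` with `|ℱ(ρ n)| ≤ 1` and `ℱ(ρ n) → 1`, so Fatou's lemma gives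
`∫ |ℱφ|² dm < ∞`, and then dominated convergence identifies the limit.
-/

open MeasureTheory Real
open scoped ENNReal RealInnerProductSpace

noncomputable section

/-- Euclidean space `ℝ^d`. -/
abbrev Ed (d : ℕ) := EuclideanSpace ℝ (Fin d)

/-- Fourier transform on `ℝ^d`: `ℱφ(ξ) = ∫ e^{-i ξ·x} φ(x) dx`. -/
def FTd (d : ℕ) (φ : Ed d → ℂ) (ξ : Ed d) : ℂ :=
  ∫ x : Ed d, Complex.exp (-(Complex.I * ((⟪ξ, x⟫ : ℝ) : ℂ))) * φ x

/-- A Borel measure on `ℝ^d` is tempered if `∫ (1+|ξ|²)^{-k} dμ < ∞` for some `k ∈ ℕ`. -/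
def IsTempered (d : ℕ) (μ : Measure (Ed d)) : Prop :=
  ∃ k : ℕ, ∫⁻ ξ, ENNReal.ofReal ((1 + ‖ξ‖ ^ 2) ^ (-(k : ℝ))) ∂μ < ⊤

/-- Local integrability for `[0,∞]`-valued functions on `ℝ^d`. -/
def LocIntENN (d : ℕ) (g : Ed d → ℝ≥0∞) : Prop :=
  ∀ s : Set (Ed d), IsCompact s → ∫⁻ x in s, g x < ⊤

/-- `g` is the Fourier transform of `m` in the Parseval sense:
`∫ φ(x) g(x) dx = (2π)^{-d} ∫ ℱφ(ξ) m(dξ)` for every Schwartz function `φ` on `ℝ^d`. -/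
def ParsevalFT (d : ℕ) (g : Ed d → ℝ≥0∞) (μ : Measure (Ed d)) : Prop :=
  ∀ φ : SchwartzMap (Ed d) ℂ,
    ∫ x, φ x * (((g x).toReal : ℝ) : ℂ) =
      (((2 * π) ^ d : ℝ)⁻¹ : ℂ) * ∫ ξ, FTd d (fun y => φ y) ξ ∂μ

open Filter Topology Convolution FourierTransform

/-- The convolution of complex-valued functions on `ℝ^d`, with the product of `ℂ` as pairing. -/
def conv (d : ℕ) (f g : Ed d → ℂ) (x : Ed d) : ℂ := ∫ t, f t * g (x - t)

/-- The integrand of the energy `∫∫ κ(x-y) g(x) conj(g(y)) dx dy`. -/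
def energyIntegrand (d : ℕ) (κ : Ed d → ℝ≥0∞) (g : Ed d → ℂ) (p : Ed d × Ed d) : ℂ :=
  ((κ (p.1 - p.2)).toReal : ℂ) * (g p.1 * (starRingEnd ℂ) (g p.2))

/-- Comparison with Mathlib's normalization `𝓕 f w = ∫ e^{-2πi w·x} f(x) dx`. -/
lemma FTd_eq_fourier (d : ℕ) (f : Ed d → ℂ) (ξ : Ed d) :
    FTd d f ξ = 𝓕 f ((2 * π)⁻¹ • ξ) := by
  rw [Real.fourier_eq', FTd]
  congr 1
  ext x
  rw [smul_eq_mul, inner_smul_right, real_inner_comm]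
  congr 2
  push_cast
  have : (π : ℂ) ≠ 0 := by exact_mod_cast Real.pi_ne_zero
  field_simp

lemma FTd_conv (d : ℕ) {f g : Ed d → ℂ} (hf : Integrable f) (hg : Integrable g) (ξ : Ed d) :
    FTd d (conv d f g) ξ = FTd d f ξ * FTd d g ξ := by
  rw [FTd_eq_fourier, FTd_eq_fourier, FTd_eq_fourier]
  exact Real.fourier_mul_convolution_eq hf hg _

lemma FTd_conj_neg (d : ℕ) (f : Ed d → ℂ) (ξ : Ed d) :
    FTd d (fun x => (starRingEnd ℂ) (f (-x))) ξ = (starRingEnd ℂ) (FTd d f ξ) := by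
  unfold FTd
  rw [← integral_conj, ← integral_neg_eq_self]
  congr 1
  ext x
  simp [← Complex.exp_conj]

lemma continuous_FTd (d : ℕ) {f : Ed d → ℂ} (hf : Integrable f) : Continuous (FTd d f) := by
  have h : Continuous (𝓕 f) :=
    VectorFourier.fourierIntegral_continuous Real.continuous_fourierChar
      (by exact continuous_inner) hf
  have : FTd d f = fun ξ => 𝓕 f ((2 * π)⁻¹ • ξ) := funext (FTd_eq_fourier d f)
  rw [this]
  exact h.comp (continuous_const_smul _)

lemma IsTempered.hasTemperateGrowth {d : ℕ} {m : Measure (Ed d)} (h : IsTempered d m) :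
    m.HasTemperateGrowth := by
  obtain ⟨k, hk⟩ := h
  have hpos : ∀ x : Ed d, 0 < 1 + ‖x‖ := fun x => by positivity
  refine ⟨2 * k, ?_, ?_⟩
  · refine Continuous.aestronglyMeasurable ?_
    refine Continuous.rpow_const (by fun_prop) fun x => Or.inl (hpos x).ne'
  · refine lt_of_le_of_lt (lintegral_mono fun x => ?_) hk
    rw [Real.enorm_eq_ofReal (Real.rpow_nonneg (hpos x).le _)]
    refine ENNReal.ofReal_le_ofReal ?_
    have h2 : (1 + ‖x‖) ^ (-((2 * k : ℕ) : ℝ)) = ((1 + ‖x‖) ^ 2) ^ (-(k : ℝ)) := by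
      rw [← Real.rpow_natCast, ← Real.rpow_mul (hpos x).le]
      congr 1
      push_cast
      ring
    rw [h2]
    refine Real.rpow_le_rpow_of_nonpos (by positivity) ?_ (by simp)
    nlinarith [norm_nonneg x]

/-- Fourier transforms of Schwartz functions are integrable for tempered measures. -/
lemma integrable_FTd_schwartz {d : ℕ} {m : Measure (Ed d)} (h : IsTempered d m)
    (ψ : SchwartzMap (Ed d) ℂ) : Integrable (FTd d ψ) m := by
  have := h.hasTemperateGrowth
  have hc : (2 * π)⁻¹ ≠ 0 := by positivity
  let e : Ed d ≃L[ℝ] Ed d := ContinuousLinearEquiv.smulLeft (Units.mk0 _ hc)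
  have h1 := (SchwartzMap.compCLMOfContinuousLinearEquiv ℂ e (𝓕 ψ)).integrable (μ := m)
  refine h1.congr (Eventually.of_forall fun ξ => ?_)
  rw [FTd_eq_fourier]
  rfl

/-- The kernel `κ(x-y)` is integrable over products of balls: for `x, y` in the ball of radius `R`,
the difference lies in the ball of radius `2R`, so the function below dominates. -/
lemma integrable_kernel {d : ℕ} {κ : Ed d → ℝ≥0∞} (hκm : Measurable κ) (hκ : LocIntENN d κ)
    (R : ℝ) : Integrable (fun p : Ed d × Ed d =>
      (Metric.closedBall (0 : Ed d) R).indicator (fun _ => (1 : ℝ)) p.2 *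
      (Metric.closedBall (0 : Ed d) (2 * R)).indicator (fun z => (κ z).toReal) (p.1 - p.2)) := by
  have h1 : Integrable ((Metric.closedBall (0 : Ed d) R).indicator (fun _ => (1 : ℝ))) :=
    (integrable_indicator_iff Metric.isClosed_closedBall.measurableSet).2
      (integrableOn_const (isCompact_closedBall _ _).measure_lt_top.ne)
  have h2 : Integrable
      ((Metric.closedBall (0 : Ed d) (2 * R)).indicator (fun z => (κ z).toReal)) :=
    (integrable_indicator_iff Metric.isClosed_closedBall.measurableSet).2
      (integrable_toReal_of_lintegral_ne_top hκm.aemeasurable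
        (hκ _ (isCompact_closedBall _ _)).ne)
  -- Pull back an integrable product function along `(x, y) ↦ (y, x - y)`.
  exact (measurePreserving_prod_sub_swap (volume : Measure (Ed d)) volume)
    |>.integrable_comp_of_integrable (h1.mul_prod h2)

lemma norm_energyIntegrand_le {d : ℕ} {κ : Ed d → ℝ≥0∞} {g : Ed d → ℂ} {C R : ℝ}
    (hC : ∀ x, ‖g x‖ ≤ C) (hR : ∀ x, R < ‖x‖ → g x = 0) (p : Ed d × Ed d) :
    ‖energyIntegrand d κ g p‖ ≤ C ^ 2 *
      ((Metric.closedBall (0 : Ed d) R).indicator (fun _ => (1 : ℝ)) p.2 *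
      (Metric.closedBall (0 : Ed d) (2 * R)).indicator (fun z => (κ z).toReal) (p.1 - p.2)) := by
  have hrhs : 0 ≤ C ^ 2 *
      ((Metric.closedBall (0 : Ed d) R).indicator (fun _ => (1 : ℝ)) p.2 *
      (Metric.closedBall (0 : Ed d) (2 * R)).indicator (fun z => (κ z).toReal) (p.1 - p.2)) := by
    refine mul_nonneg (sq_nonneg _) (mul_nonneg ?_ ?_)
    · exact Set.indicator_nonneg (fun _ _ => zero_le_one) _
    · exact Set.indicator_nonneg (fun _ _ => ENNReal.toReal_nonneg) _
  by_cases h1 : R < ‖p.1‖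
  · simpa [energyIntegrand, hR _ h1] using hrhs
  by_cases h2 : R < ‖p.2‖
  · simpa [energyIntegrand, hR _ h2] using hrhs
  have m2 : p.2 ∈ Metric.closedBall (0 : Ed d) R := by simpa using h2
  have m1 : p.1 - p.2 ∈ Metric.closedBall (0 : Ed d) (2 * R) := by
    rw [mem_closedBall_zero_iff]
    linarith [norm_sub_le p.1 p.2]
  rw [Set.indicator_of_mem m2, Set.indicator_of_mem m1, energyIntegrand, norm_mul, norm_mul,
    RCLike.norm_conj, Complex.norm_real, Real.norm_of_nonneg ENNReal.toReal_nonneg, one_mul,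
    mul_comm, sq]
  gcongr
  · exact (norm_nonneg _).trans (hC p.1)
  · exact hC _
  · exact hC _

lemma aestronglyMeasurable_energyIntegrand {d : ℕ} {κ : Ed d → ℝ≥0∞} (hκm : Measurable κ)
    {g : Ed d → ℂ} (hg : AEStronglyMeasurable g) :
    AEStronglyMeasurable (energyIntegrand d κ g) := by
  refine AEStronglyMeasurable.mul ?_ (AEStronglyMeasurable.mul ?_ ?_)
  · exact (Complex.measurable_ofReal.comp (hκm.comp
      (measurable_fst.sub measurable_snd)).ennreal_toReal).aestronglyMeasurable
  · exact hg.comp_fst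
  · exact Complex.continuous_conj.comp_aestronglyMeasurable hg.comp_snd

lemma integrable_energyIntegrand {d : ℕ} {κ : Ed d → ℝ≥0∞} (hκm : Measurable κ)
    (hκ : LocIntENN d κ) {g : Ed d → ℂ} (hg : AEStronglyMeasurable g) {C R : ℝ}
    (hC : ∀ x, ‖g x‖ ≤ C) (hR : ∀ x, R < ‖x‖ → g x = 0) :
    Integrable (energyIntegrand d κ g) :=
  ((integrable_kernel hκm hκ R).const_mul (C ^ 2)).mono'
    (aestronglyMeasurable_energyIntegrand hκm hg)
    (Eventually.of_forall (norm_energyIntegrand_le hC hR))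

/-- Unfolding the autocorrelation of `f` turns its pairing with `κ` into the energy of `f`. -/
lemma integral_autocorrelation_mul {d : ℕ} {κ : Ed d → ℝ≥0∞} {f : Ed d → ℂ}
    (hint : Integrable (energyIntegrand d κ f)) :
    ∫ x, conv d f (fun s => (starRingEnd ℂ) (f (-s))) x * (((κ x).toReal : ℝ) : ℂ) =
      ∫ p, energyIntegrand d κ f p := by
  have hG : Integrable (fun p : Ed d × Ed d =>
      ((κ p.1).toReal : ℂ) * (f p.2 * (starRingEnd ℂ) (f (p.2 - p.1)))) := by
    have h1 : MeasurePreserving (fun p : Ed d × Ed d => (p.2, p.2 + -p.1)) :=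
      (measurePreserving_prod_add (volume : Measure (Ed d)) volume).comp
        (((MeasurePreserving.id volume).prod (Measure.measurePreserving_neg volume)).comp
          Measure.measurePreserving_swap)
    simpa [energyIntegrand, Function.comp_def, ← sub_eq_add_neg] using h1.integrable_comp_of_integrable hint
  have e1 : ∀ x, conv d f (fun s => (starRingEnd ℂ) (f (-s))) x * (((κ x).toReal : ℝ) : ℂ) =
      ∫ t, ((κ x).toReal : ℂ) * (f t * (starRingEnd ℂ) (f (t - x))) := fun x => by
    rw [conv, mul_comm, ← integral_const_mul]
    simp
  simp_rw [e1]
  rw [integral_integral_swap hG, Measure.volume_eq_prod, integral_prod _ hint]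
  congr 1
  ext t
  rw [← integral_sub_left_eq_self _ _ t]
  simp [energyIntegrand]

/-- The energy identity for smooth compactly supported functions. -/
lemma energy_smooth {d : ℕ} {m : Measure (Ed d)} (hmt : IsTempered d m)
    {κ : Ed d → ℝ≥0∞} (hκP : ParsevalFT d κ m) {f : Ed d → ℂ} (hf : ContDiff ℝ (⊤ : ℕ∞) f)
    (hfc : HasCompactSupport f) (hint : Integrable (energyIntegrand d κ f)) :
    Integrable (fun ξ => ‖FTd d f ξ‖ ^ 2) m ∧
      ∫ p, energyIntegrand d κ f p =
        (((2 * π) ^ d : ℝ)⁻¹ : ℂ) * ((∫ ξ, ‖FTd d f ξ‖ ^ 2 ∂m : ℝ) : ℂ) := by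
  set g : Ed d → ℂ := fun s => (starRingEnd ℂ) (f (-s)) with hg
  have hgd : ContDiff ℝ (⊤ : ℕ∞) g := Complex.conjCLE.contDiff.comp (hf.comp contDiff_neg)
  have hgc : HasCompactSupport g :=
    (hfc.comp_homeomorph (Homeomorph.neg (Ed d))).comp_left (map_zero (starRingEnd ℂ))
  have hfi : Integrable f := hf.continuous.integrable_of_hasCompactSupport hfc
  have hgi : Integrable g := hgd.continuous.integrable_of_hasCompactSupport hgc
  have hψd : ContDiff ℝ (⊤ : ℕ∞) (conv d f g) :=
    hgc.contDiff_convolution_right (ContinuousLinearMap.mul ℝ ℂ) hfi.locallyIntegrable hgd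
  have hψc : HasCompactSupport (conv d f g) :=
    HasCompactSupport.convolution (ContinuousLinearMap.mul ℝ ℂ) (μ := volume) hfc hgc
  have hFT : ∀ ξ, FTd d (conv d f g) ξ = ((‖FTd d f ξ‖ ^ 2 : ℝ) : ℂ) := fun ξ => by
    rw [FTd_conv d hfi hgi, FTd_conj_neg, Complex.mul_conj, Complex.normSq_eq_norm_sq]
  have h1 := integrable_FTd_schwartz hmt (hψc.toSchwartzMap hψd)
  have h2 := hκP (hψc.toSchwartzMap hψd)
  have hcoe : ((hψc.toSchwartzMap hψd : SchwartzMap (Ed d) ℂ) : Ed d → ℂ) = conv d f g := rfl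
  simp only [hcoe] at h1 h2
  rw [integral_autocorrelation_mul hint] at h2
  rw [funext hFT] at h1
  refine ⟨by simpa only [RCLike.re_to_complex, Complex.ofReal_re] using h1.re, ?_⟩
  have h3 : ∫ ξ, FTd d (fun y => conv d f g y) ξ ∂m = ((∫ ξ, ‖FTd d f ξ‖ ^ 2 ∂m : ℝ) : ℂ) :=
    (integral_congr_ae (Eventually.of_forall hFT)).trans integral_ofReal
  rw [h2, h3]

/-- The continuity set is a `Gδ`, and the function restricted to it is continuous. -/
lemma aestronglyMeasurable_of_ae_continuousAt {d : ℕ} {φ : Ed d → ℂ}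
    (h : ∀ᵐ x : Ed d, ContinuousAt φ x) : AEStronglyMeasurable φ := by
  have hs : MeasurableSet {x | ContinuousAt φ x} := (IsGδ.setOfPred_continuousAt φ).measurableSet
  have h1 : ContinuousOn φ {x | ContinuousAt φ x} := fun x hx => hx.continuousWithinAt
  have h2 := h1.aestronglyMeasurable (μ := volume) hs
  have h3 : (volume : Measure (Ed d)).restrict {x | ContinuousAt φ x} = volume :=
    Measure.restrict_eq_self_of_ae_mem h
  rwa [h3] at h2

/-- Bump functions at the origin supported in balls of radius `1 / (n + 1)`. -/
def bump (d n : ℕ) : ContDiffBump (0 : Ed d) where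
  rIn := 1 / (n + 1) / 2
  rOut := 1 / (n + 1)
  rIn_pos := by positivity
  rIn_lt_rOut := half_lt_self (by positivity)

/-- The mollifier of mass one attached to `bump d n`, as a complex-valued function. -/
def mollifier (d n : ℕ) (x : Ed d) : ℂ := (((bump d n).normed volume x : ℝ) : ℂ)

lemma tendsto_rOut_bump (d : ℕ) : Tendsto (fun n => (bump d n).rOut) atTop (𝓝 0) :=
  tendsto_one_div_add_atTop_nhds_zero_nat

lemma norm_mollifier (d n : ℕ) (x : Ed d) : ‖mollifier d n x‖ = (bump d n).normed volume x := by
  rw [mollifier, Complex.norm_real, Real.norm_of_nonneg ((bump d n).nonneg_normed x)]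

lemma mollifier_eq_zero {d n : ℕ} {x : Ed d} (h : 1 < ‖x‖) : mollifier d n x = 0 := by
  have hx : x ∉ Function.support ((bump d n).normed volume) := by
    rw [ContDiffBump.support_normed_eq, mem_ball_zero_iff, not_lt]
    refine le_trans ?_ h.le
    change (1 : ℝ) / (n + 1) ≤ 1
    rw [div_le_one (by positivity)]
    linarith [(Nat.cast_nonneg n : (0 : ℝ) ≤ n)]
  rw [mollifier, Function.notMem_support.1 hx, Complex.ofReal_zero]

lemma contDiff_mollifier (d n : ℕ) : ContDiff ℝ (⊤ : ℕ∞) (mollifier d n) :=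
  Complex.ofRealCLM.contDiff.comp (bump d n).contDiff_normed

lemma hasCompactSupport_mollifier (d n : ℕ) : HasCompactSupport (mollifier d n) :=
  (bump d n).hasCompactSupport_normed.comp_left Complex.ofReal_zero

lemma integrable_mollifier (d n : ℕ) : Integrable (mollifier d n) :=
  (contDiff_mollifier d n).continuous.integrable_of_hasCompactSupport
    (hasCompactSupport_mollifier d n)

lemma norm_FTd_mollifier_le (d n : ℕ) (ξ : Ed d) : ‖FTd d (mollifier d n) ξ‖ ≤ 1 := by
  refine (norm_integral_le_integral_norm _).trans_eq ?_
  rw [← (bump d n).integral_normed (μ := volume)]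
  congr 1
  ext x
  rw [norm_mul, norm_mollifier, Complex.norm_exp]
  simp

lemma conv_mollifier_eq (d n : ℕ) (g : Ed d → ℂ) (x : Ed d) :
    conv d (mollifier d n) g x =
      ((bump d n).normed volume ⋆[ContinuousLinearMap.lsmul ℝ ℝ, volume] g) x := by
  simp [conv, convolution, mollifier]

lemma tendsto_conv_mollifier {d : ℕ} {g : Ed d → ℂ} (hg : AEStronglyMeasurable g) {x : Ed d}
    (hx : ContinuousAt g x) :
    Tendsto (fun n => conv d (mollifier d n) g x) atTop (𝓝 (g x)) := by
  simp_rw [conv_mollifier_eq]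
  exact ContDiffBump.convolution_tendsto_right (g := fun _ => g) (tendsto_rOut_bump d)
    (Eventually.of_forall fun _ => hg) (hx.tendsto.comp tendsto_snd) tendsto_const_nhds

/-- The Fourier transform of the mollifier at `ξ` is its convolution with `y ↦ e^{iξ·y}` at the
origin, so it tends to `1`. -/
lemma tendsto_FTd_mollifier (d : ℕ) (ξ : Ed d) :
    Tendsto (fun n => FTd d (mollifier d n) ξ) atTop (𝓝 1) := by
  have hc : Continuous fun y : Ed d => Complex.exp (Complex.I * ((⟪ξ, y⟫ : ℝ) : ℂ)) := by
    fun_prop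
  have h := tendsto_conv_mollifier hc.aestronglyMeasurable (x := 0) hc.continuousAt
  simpa [conv, FTd, mul_comm] using h

lemma norm_conv_mollifier_le {d : ℕ} (n : ℕ) {g : Ed d → ℂ} {C : ℝ} (hC : ∀ x, ‖g x‖ ≤ C)
    (x : Ed d) : ‖conv d (mollifier d n) g x‖ ≤ C := by
  have h : ∫ t, (bump d n).normed volume t * C = C := by
    rw [integral_mul_const, (bump d n).integral_normed, one_mul]
  refine (norm_integral_le_of_norm_le ((bump d n).integrable_normed.mul_const C)
    (Eventually.of_forall fun t => ?_)).trans_eq h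
  rw [norm_mul, norm_mollifier]
  exact mul_le_mul_of_nonneg_left (hC _) ((bump d n).nonneg_normed t)

lemma conv_mollifier_eq_zero {d : ℕ} (n : ℕ) {g : Ed d → ℂ} {R : ℝ}
    (hR : ∀ x, R < ‖x‖ → g x = 0) {x : Ed d} (hx : R + 1 < ‖x‖) :
    conv d (mollifier d n) g x = 0 := by
  refine integral_eq_zero_of_ae (Eventually.of_forall fun t => ?_)
  by_cases ht : 1 < ‖t‖
  · simp [mollifier_eq_zero ht]
  · have : R < ‖x - t‖ := by linarith [norm_sub_norm_le x t]
    simp [hR _ this]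

/-- Energy identity: for bounded, boundedly supported, a.e. continuous
`φ : ℝ^d → ℂ`, `∫∫ κ(x−y) φ(x) conj(φ(y)) dx dy = (2π)^{-d} ∫ |ℱφ(ξ)|² m(dξ)`; the
left-hand side is absolutely convergent, real and nonnegative, and the right-hand side
is finite. -/
theorem stmt3 (d : ℕ) (m : Measure (Ed d)) (hmt : IsTempered d m)
    (κ : Ed d → ℝ≥0∞) (hκm : Measurable κ) (hκloc : LocIntENN d κ)
    (hκfin : ∀ x : Ed d, x ≠ 0 → κ x < ⊤)
    (hκP : ParsevalFT d κ m)
    (φ : Ed d → ℂ)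
    (hbdd : ∃ C : ℝ, ∀ x, ‖φ x‖ ≤ C)
    (hsupp : Bornology.IsBounded (Function.support φ))
    (hcont : ∀ᵐ x : Ed d, ContinuousAt φ x) :
    Integrable (fun p : Ed d × Ed d =>
        ((κ (p.1 - p.2)).toReal : ℂ) * (φ p.1 * (starRingEnd ℂ) (φ p.2))) ∧
      ∫⁻ ξ, (‖FTd d φ ξ‖₊ : ℝ≥0∞) ^ 2 ∂m < ⊤ ∧
      (∫ p : Ed d × Ed d,
          ((κ (p.1 - p.2)).toReal : ℂ) * (φ p.1 * (starRingEnd ℂ) (φ p.2))) =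
        (((2 * π) ^ d : ℝ)⁻¹ : ℂ) *
          (((∫⁻ ξ, (‖FTd d φ ξ‖₊ : ℝ≥0∞) ^ 2 ∂m).toReal : ℝ) : ℂ) ∧
      0 ≤ (∫ p : Ed d × Ed d,
          ((κ (p.1 - p.2)).toReal : ℂ) * (φ p.1 * (starRingEnd ℂ) (φ p.2))).re ∧
      (∫ p : Ed d × Ed d,
          ((κ (p.1 - p.2)).toReal : ℂ) * (φ p.1 * (starRingEnd ℂ) (φ p.2))).im = 0 := by
  obtain ⟨C, hC⟩ := hbdd
  obtain ⟨R, hR⟩ : ∃ R : ℝ, ∀ x, R < ‖x‖ → φ x = 0 := by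
    obtain ⟨R, hR⟩ := hsupp.exists_norm_le
    exact ⟨R, fun x hx => by_contra fun h => absurd (hR x h) (not_le.2 hx)⟩
  have hφm := aestronglyMeasurable_of_ae_continuousAt hcont
  have hφc : HasCompactSupport φ :=
    HasCompactSupport.intro (isCompact_closedBall (0 : Ed d) R) fun x hx => hR x (by simpa using hx)
  have hφi : Integrable φ := by
    refine (integrableOn_iff_integrable_of_support_subset (s := Metric.closedBall (0 : Ed d) R)
      fun x hx => ?_).1 ?_
    · by_contra h
      exact hx (hR x (by simpa using h))
    · exact Measure.integrableOn_of_bounded (isCompact_closedBall _ _).measure_lt_top.ne hφm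
        (Eventually.of_forall hC)
  have hE : Integrable (energyIntegrand d κ φ) := integrable_energyIntegrand hκm hκloc hφm hC hR
  set f : ℕ → Ed d → ℂ := fun n => conv d (mollifier d n) φ with hf
  have hfd : ∀ n, ContDiff ℝ (⊤ : ℕ∞) (f n) := fun n =>
    (hasCompactSupport_mollifier d n).contDiff_convolution_left (ContinuousLinearMap.mul ℝ ℂ)
      (contDiff_mollifier d n) hφi.locallyIntegrable
  have hfc : ∀ n, HasCompactSupport (f n) := fun n =>
    HasCompactSupport.convolution (ContinuousLinearMap.mul ℝ ℂ) (μ := volume)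
      (hasCompactSupport_mollifier d n) hφc
  have hfC : ∀ n x, ‖f n x‖ ≤ C := fun n => norm_conv_mollifier_le n hC
  have hfR : ∀ n x, R + 1 < ‖x‖ → f n x = 0 := fun n x => conv_mollifier_eq_zero n hR
  have hfm : ∀ n, AEStronglyMeasurable (f n) := fun n => (hfd n).continuous.aestronglyMeasurable
  have hfE : ∀ n, Integrable (energyIntegrand d κ (f n)) := fun n =>
    integrable_energyIntegrand hκm hκloc (hfm n) (hfC n) (hfR n)
  have hsm := fun n => energy_smooth hmt hκP (hfd n) (hfc n) (hfE n)
  have hFT : ∀ n ξ, FTd d (f n) ξ = FTd d (mollifier d n) ξ * FTd d φ ξ := fun n =>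
    FTd_conv d (integrable_mollifier d n) hφi
  have hFTle : ∀ n ξ, ‖FTd d (f n) ξ‖ ≤ ‖FTd d φ ξ‖ := fun n ξ => by
    rw [hFT, norm_mul]
    exact mul_le_of_le_one_left (norm_nonneg _) (norm_FTd_mollifier_le d n ξ)
  have hFTlim : ∀ ξ, Tendsto (fun n => ‖FTd d (f n) ξ‖ ^ 2) atTop (𝓝 (‖FTd d φ ξ‖ ^ 2)) :=
    fun ξ => by
      simp_rw [hFT]
      simpa using (((tendsto_FTd_mollifier d ξ).mul_const (FTd d φ ξ)).norm.pow 2)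
  -- Convergence of the energies: the kernel cut off to balls is the dominating function.
  have hElim : Tendsto (fun n => ∫ p, energyIntegrand d κ (f n) p) atTop
      (𝓝 (∫ p, energyIntegrand d κ φ p)) := by
    refine tendsto_integral_of_dominated_convergence _
      (fun n => aestronglyMeasurable_energyIntegrand hκm (hfm n))
      ((integrable_kernel hκm hκloc (R + 1)).const_mul (C ^ 2))
      (fun n => Eventually.of_forall (norm_energyIntegrand_le (hfC n) (hfR n))) ?_
    filter_upwards [Measure.quasiMeasurePreserving_fst.ae hcont,
      Measure.quasiMeasurePreserving_snd.ae hcont] with p h1 h2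
    exact ((tendsto_conv_mollifier hφm h1).mul
      ((Complex.continuous_conj.tendsto _).comp (tendsto_conv_mollifier hφm h2))).const_mul _
  have hpos : (0 : ℝ) < (2 * π) ^ d := by positivity
  have hmE : ∀ n, ∫ ξ, ‖FTd d (f n) ξ‖ ^ 2 ∂m =
      (2 * π) ^ d * (∫ p, energyIntegrand d κ (f n) p).re := fun n => by
    rw [(hsm n).2, ← Complex.ofReal_inv, Complex.re_ofReal_mul, Complex.ofReal_re,
      mul_inv_cancel_left₀ hpos.ne']
  have hcontφ : Continuous (FTd d φ) := continuous_FTd d hφi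
  have hcontf : ∀ n, Continuous (FTd d (f n)) := fun n =>
    continuous_FTd d ((hfd n).continuous.integrable_of_hasCompactSupport (hfc n))
  have hmlim : Tendsto (fun n => ∫ ξ, ‖FTd d (f n) ξ‖ ^ 2 ∂m) atTop
      (𝓝 ((2 * π) ^ d * (∫ p, energyIntegrand d κ φ p).re)) := by
    simp_rw [hmE]
    exact ((Complex.continuous_re.tendsto _).comp hElim).const_mul _
  -- Fatou's lemma gives square integrability of the Fourier transform of `φ`.
  have hfin : ∫⁻ ξ, ENNReal.ofReal (‖FTd d φ ξ‖ ^ 2) ∂m < ⊤ := by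
    have h1 : ∀ ξ, ENNReal.ofReal (‖FTd d φ ξ‖ ^ 2) =
        liminf (fun n => ENNReal.ofReal (‖FTd d (f n) ξ‖ ^ 2)) atTop := fun ξ =>
      ((ENNReal.continuous_ofReal.tendsto _).comp (hFTlim ξ)).liminf_eq.symm
    have h2 : ∀ n, ∫⁻ ξ, ENNReal.ofReal (‖FTd d (f n) ξ‖ ^ 2) ∂m =
        ENNReal.ofReal (∫ ξ, ‖FTd d (f n) ξ‖ ^ 2 ∂m) := fun n =>
      (ofReal_integral_eq_lintegral_ofReal (hsm n).1
        (Eventually.of_forall fun ξ => sq_nonneg _)).symm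
    simp_rw [h1]
    refine (lintegral_liminf_le fun n => ?_).trans_lt ?_
    · exact (((hcontf n).norm.pow 2).measurable).ennreal_ofReal
    · simp_rw [h2]
      have h3 := ((ENNReal.continuous_ofReal.tendsto _).comp hmlim).liminf_eq
      simp only [Function.comp_def] at h3
      rw [h3]
      exact ENNReal.ofReal_lt_top
  have hmeas : AEStronglyMeasurable (fun ξ => ‖FTd d φ ξ‖ ^ 2) m :=
    (hcontφ.norm.pow 2).aestronglyMeasurable
  have hφ2 : Integrable (fun ξ => ‖FTd d φ ξ‖ ^ 2) m :=
    ⟨hmeas, (hasFiniteIntegral_iff_ofReal (Eventually.of_forall fun ξ => sq_nonneg _)).2 hfin⟩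
  have hmlim' : Tendsto (fun n => ∫ ξ, ‖FTd d (f n) ξ‖ ^ 2 ∂m) atTop
      (𝓝 (∫ ξ, ‖FTd d φ ξ‖ ^ 2 ∂m)) := by
    refine tendsto_integral_of_dominated_convergence _
      (fun n => ((hcontf n).norm.pow 2).aestronglyMeasurable) hφ2
      (fun n => Eventually.of_forall fun ξ => ?_) (Eventually.of_forall hFTlim)
    rw [Real.norm_of_nonneg (sq_nonneg _)]
    exact pow_le_pow_left₀ (norm_nonneg _) (hFTle n ξ) 2
  have hmain : ∫ p, energyIntegrand d κ φ p =
      ((((2 * π) ^ d)⁻¹ * ∫ ξ, ‖FTd d φ ξ‖ ^ 2 ∂m : ℝ) : ℂ) := by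
    refine tendsto_nhds_unique hElim ?_
    simp_rw [fun n => (hsm n).2, ← Complex.ofReal_inv, ← Complex.ofReal_mul]
    exact (Complex.continuous_ofReal.tendsto _).comp (hmlim'.const_mul _)
  have hnn : ∀ ξ, (‖FTd d φ ξ‖₊ : ℝ≥0∞) ^ 2 = ENNReal.ofReal (‖FTd d φ ξ‖ ^ 2) := fun ξ => by
    rw [ENNReal.ofReal_pow (norm_nonneg _), ofReal_norm]
    rfl
  have hreal : (∫⁻ ξ, (‖FTd d φ ξ‖₊ : ℝ≥0∞) ^ 2 ∂m).toReal = ∫ ξ, ‖FTd d φ ξ‖ ^ 2 ∂m := by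
    simp_rw [hnn]
    exact (integral_eq_lintegral_of_nonneg_ae (Eventually.of_forall fun ξ => sq_nonneg _)
      hmeas).symm
  change Integrable (energyIntegrand d κ φ) ∧ _ ∧ ∫ p, energyIntegrand d κ φ p = _ ∧
    0 ≤ (∫ p, energyIntegrand d κ φ p).re ∧ (∫ p, energyIntegrand d κ φ p).im = 0
  refine ⟨hE, ?_, ?_, ?_, ?_⟩
  · simp_rw [hnn]
    exact hfin
  · rw [hmain, hreal]
    push_cast
    rfl
  · rw [hmain, Complex.ofReal_re]
    exact mul_nonneg (inv_nonneg.2 hpos.le) (integral_nonneg fun ξ => sq_nonneg _)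
  · rw [hmain, Complex.ofReal_im]
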